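/- arXiv:math/0610093 — 2 statements merged into one kernel-verified Lean document; each statement's English description precedes it below -/
import Mathlib

section
/- Let p be a prime, A an integrally closed domain of characteristic p with fraction field K, and n ≥ 1. If x ∈ W_n(K) is such that F(x) − x lies in the image of the natural ring homomorphism W_n(A) → W_n(K), then x itself lies in the image of W_n(A) → W_n(K). -/
/-- The ring homomorphism `W_n(R) → W_n(S)` induced coordinatewise by a ring
homomorphism `f : R → S`, as a function on truncated Witt vectors. -/
def TruncatedWittVector.tmap (p n : ℕ) {R S : Type*} [CommRing R] [CommRing S]
    (f : R →+* S) (x : TruncatedWittVector p n R) : TruncatedWittVector p n S :=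
  TruncatedWittVector.mk p fun i => f (x.coeff i)

/-- The Frobenius `F : W_n(R) → W_n(R)` sending `(a_1,…,a_n)` to `(a_1^p,…,a_n^p)`. -/
def TruncatedWittVector.tfrob (p n : ℕ) (R : Type*) [CommRing R]
    (x : TruncatedWittVector p n R) : TruncatedWittVector p n R :=
  TruncatedWittVector.mk p fun i => (x.coeff i) ^ p

/-!
Modulo Verschiebung, a solution `x` of `F x - x = a` is a solution of the Artin–Schreier equation
`y ^ p - y = c` over `A`, so its zeroth coordinate lies in `A` by integral closedness. Subtracting a
Teichmüller representative makes `x` divisible by `V`, and `F` commutes with `V` in characteristic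
`p`, so the quotient solves an equation of the same kind; repeating this `n` times gives the result.
-/

open Polynomial in
theorem isIntegral_of_pow_sub_self {R S : Type*} [CommRing R] [CommRing S] [Algebra R S]
    {m : ℕ} (hm : 1 < m) {y : S} (hy : IsIntegral R (y ^ m - y)) : IsIntegral R y := by
  nontriviality R
  have hdeg : (X : R[X]).degree < m := by
    rw [degree_X]
    exact_mod_cast hm
  have hnat : (X ^ m - X : R[X]).natDegree ≠ 0 := by
    rw [natDegree_sub_eq_left_of_natDegree_lt] <;> simp <;> omega
  exact .of_aeval_monic (monic_X_pow_sub hdeg) hnat (by simpa using hy)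

section

open WittVector

variable {p : ℕ} [Fact p.Prime] {R S : Type*} [CommRing R] [CommRing S]

theorem frobenius_sub_self_iterate_verschiebung [CharP R p] (k : ℕ) (x : WittVector p R) :
    frobenius (verschiebung^[k] x) - verschiebung^[k] x = verschiebung^[k] (frobenius x - x) := by
  rw [iterate_map_sub, (verschiebung_frobenius_comm.iterate_left k).eq]

theorem coeff_zero_sub (x y : WittVector p R) : (x - y).coeff 0 = x.coeff 0 - y.coeff 0 :=
  map_sub constantCoeff x y

theorem coeff_zero_frobenius_sub_self [CharP R p] (x : WittVector p R) :
    (frobenius x - x).coeff 0 = x.coeff 0 ^ p - x.coeff 0 := by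
  rw [coeff_zero_sub, coeff_frobenius_charP]

theorem exists_eq_map_add_verschiebung {φ : R →+* S} {x : WittVector p S}
    (hx : x.coeff 0 ∈ φ.range) :
    ∃ (b : WittVector p R) (y : WittVector p S), x = map φ b + verschiebung y := by
  obtain ⟨c, hc⟩ := hx
  have hzero : (x - map φ (teichmuller p c)).coeff 0 = 0 := by
    rw [coeff_zero_sub, map_coeff, teichmuller_coeff_zero, hc, sub_self]
  have hV := eq_iterate_verschiebung (n := 1)
    (by simpa only [Nat.lt_one_iff, forall_eq] using hzero)
  exact ⟨teichmuller p c, _, sub_eq_iff_eq_add'.mp hV⟩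

theorem map_iterate_verschiebung (φ : R →+* S) (k : ℕ) (x : WittVector p R) :
    map φ (verschiebung^[k] x) = verschiebung^[k] (map φ x) :=
  Function.Semiconj.iterate_right (map_verschiebung φ) k x

theorem truncate_iterate_verschiebung (n : ℕ) (x : WittVector p R) :
    truncate n (verschiebung^[n] x) = 0 :=
  (mem_ker_truncate n _).mpr fun _ hi => iterate_verschiebung_coeff_eq_zero x hi

theorem map_frobenius (φ : R →+* S) (x : WittVector p R) :
    map φ (frobenius x) = frobenius (map φ x) := by
  ext i
  simp only [map_coeff, coeff_frobenius]
  exact MvPolynomial.comp_aeval_apply _ φ.toIntAlgHom (frobeniusPoly p i)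

theorem coeff_zero_pow_sub_self_mem_range [CharP S p] {φ : R →+* S} {n k : ℕ} (hk : k < n)
    {a b : WittVector p R} {y : WittVector p S}
    (h : truncate n (map φ a) = truncate n
      (frobenius (map φ b + verschiebung^[k] y) - (map φ b + verschiebung^[k] y))) :
    y.coeff 0 ^ p - y.coeff 0 ∈ φ.range := by
  have htrunc : truncate n (map φ (a - (frobenius b - b))) =
      truncate n (verschiebung^[k] (frobenius y - y)) := by
    rw [map_sub, map_sub, h, ← map_sub, ← frobenius_sub_self_iterate_verschiebung, map_sub (map φ),
      map_frobenius, map_add]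
    congr 1
    ring
  refine ⟨(a - (frobenius b - b)).coeff k, ?_⟩
  calc
    φ ((a - (frobenius b - b)).coeff k)
      = (verschiebung^[k] (frobenius y - y)).coeff k := by
        simpa only [coeff_truncate, map_coeff] using
          congrArg (TruncatedWittVector.coeff ⟨k, hk⟩) htrunc
    _ = (frobenius y - y).coeff 0 := by
        simpa using iterate_verschiebung_coeff (frobenius y - y) k 0
    _ = y.coeff 0 ^ p - y.coeff 0 := coeff_zero_frobenius_sub_self y

theorem exists_eq_map_add_iterate_verschiebung [CharP S p] {φ : R →+* S}
    (hφ : ∀ y, y ^ p - y ∈ φ.range → y ∈ φ.range)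
    {n : ℕ} {a : WittVector p R} {x : WittVector p S}
    (h : truncate n (map φ a) = truncate n (frobenius x - x)) {k : ℕ} (hk : k ≤ n) :
    ∃ (b : WittVector p R) (y : WittVector p S), x = map φ b + verschiebung^[k] y := by
  induction k with
  | zero => exact ⟨0, x, by simp⟩
  | succ k ih =>
    obtain ⟨b, y, rfl⟩ := ih (by omega)
    obtain ⟨c, z, rfl⟩ :=
      exists_eq_map_add_verschiebung (hφ _ (coeff_zero_pow_sub_self_mem_range hk h))
    refine ⟨b + verschiebung^[k] c, z, ?_⟩
    rw [iterate_map_add, map_add, map_iterate_verschiebung, add_assoc,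
      Function.iterate_succ_apply]

theorem tmap_truncate (n : ℕ) (φ : R →+* S) (x : WittVector p R) :
    TruncatedWittVector.tmap p n φ (truncate n x) = truncate n (map φ x) := by
  ext i
  simp [TruncatedWittVector.tmap]

theorem tfrob_truncate [CharP R p] (n : ℕ) (x : WittVector p R) :
    TruncatedWittVector.tfrob p n R (truncate n x) = truncate n (frobenius x) := by
  ext i
  simp [TruncatedWittVector.tfrob, coeff_frobenius_charP]

end

theorem mem_wittVector_of_artinSchreierWitt_mem_general
    (p : ℕ) [Fact p.Prime] {A K : Type*} [CommRing A] [CommRing K] [CharP K p] (φ : A →+* K)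
    (hφ : ∀ y, y ^ p - y ∈ φ.range → y ∈ φ.range)
    (n : ℕ) (x : TruncatedWittVector p n K)
    (h : ∃ a : TruncatedWittVector p n A,
        TruncatedWittVector.tmap p n φ a = TruncatedWittVector.tfrob p n K x - x) :
    ∃ y : TruncatedWittVector p n A, TruncatedWittVector.tmap p n φ y = x := by
  obtain ⟨a, ha⟩ := h
  obtain ⟨x, rfl⟩ := WittVector.truncate_surjective p n K x
  obtain ⟨a, rfl⟩ := WittVector.truncate_surjective p n A a
  rw [tmap_truncate, tfrob_truncate, ← map_sub] at ha
  obtain ⟨b, y, rfl⟩ := exists_eq_map_add_iterate_verschiebung hφ ha le_rfl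
  exact ⟨WittVector.truncate n b, by
    rw [tmap_truncate, map_add, truncate_iterate_verschiebung, add_zero]⟩

/-- Let `p` be a prime, `A` an integrally closed domain of characteristic `p`
with fraction field `K`, and `n ≥ 1`. If `x ∈ W_n(K)` is such that `F(x) - x` lies in the
image of `W_n(A) → W_n(K)`, then `x` itself lies in the image of `W_n(A) → W_n(K)`. -/
theorem mem_wittVector_of_artinSchreierWitt_mem
    (p : ℕ) [Fact p.Prime] (A K : Type) [CommRing A] [IsDomain A] [CharP A p]
    [IsIntegrallyClosed A] [Field K] [Algebra A K] [IsFractionRing A K]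
    (n : ℕ) (hn : 1 ≤ n) (x : TruncatedWittVector p n K)
    (h : ∃ a : TruncatedWittVector p n A,
        TruncatedWittVector.tmap p n (algebraMap A K) a =
          TruncatedWittVector.tfrob p n K x - x) :
    ∃ y : TruncatedWittVector p n A,
      TruncatedWittVector.tmap p n (algebraMap A K) y = x := by
  have := charP_of_injective_algebraMap (IsFractionRing.injective A K) p
  exact mem_wittVector_of_artinSchreierWitt_mem_general p (algebraMap A K)
    (fun _ ⟨c, hc⟩ => IsIntegrallyClosed.algebraMap_eq_of_integral
      (isIntegral_of_pow_sub_self (Fact.out : p.Prime).one_lt (hc ▸ isIntegral_algebraMap)))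
    n x h
end

section
/- Let k be an algebraically closed field of characteristic p > 0 and n ≥ 1, and let u be a root of the polynomial f(X) = X^{p^n} − X − y^{p^n+1} over the rational function field k(y) (in some algebraic closure of k(y)). Then the extension k(y)(u)/k(y) is a Galois extension of degree p^n whose Galois group is an elementary abelian p-group, isomorphic to the direct sum of n copies of ℤ/pℤ. -/
set_option synthInstance.maxHeartbeats 1000000

/-!
Suppose `u ^ q - u = a` with `u ∈ L` and `a ∈ K`, where `L / K` is a field extension and `v` is a
valuation of `K` such that `v a > 1`. Then `u⁻¹` and `u / a` are integral over the valuation ring,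
hence so are `w = u ^ q / a = 1 + u / a` and `w⁻¹ = 1 - u⁻¹ ^ (q - 1)`. So the norm of `w` is a
unit, that is, `v (N u) ^ q = v a ^ [L : K]`.
When `v` is discrete and the order of the pole of `a` is prime to `q`, this makes `q` divide
`[K(u) : K]`. For `a = y ^ (q + 1)` the pole at infinity has order `q + 1`.

If `K` contains the field `F` with `q` elements, then the roots of `X ^ q - X - a` are the `u + c`
with `c ∈ F`, so `K(u)` is the splitting field of a separable polynomial, and `σ ↦ σ u - u` embeds
its Galois group into the additive group of `F`; the degree makes this an isomorphism.
-/

open Polynomial IntermediateField Module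
open scoped WithZero

section Valuation

theorem isIntegral_of_pow_eq_aeval {R A : Type*} [CommRing R] [CommRing A] [Algebra R A] {x : A}
    {n : ℕ} {P : R[X]} (hP : P.degree < n) (h : x ^ n = aeval x P) : IsIntegral R x :=
  ⟨X ^ n - P, monic_X_pow_sub hP, by simp [← aeval_def, h]⟩

variable {K L Γ₀ : Type*} [Field K] [Field L] [Algebra K L] [LinearOrderedCommGroupWithZero Γ₀]
  {v : Valuation K Γ₀} {q : ℕ} {a : K} {u : L}

theorem valuation_norm_le_one {x : L} (hx : IsIntegral v.integer x) : v (Algebra.norm K x) ≤ 1 :=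
  (Valuation.integer.integers v).mem_of_integral (Algebra.isIntegral_norm K hx)

theorem valuation_norm_eq_one {x : L} (hx₀ : x ≠ 0) (hx : IsIntegral v.integer x)
    (hx' : IsIntegral v.integer x⁻¹) : v (Algebra.norm K x) = 1 := by
  refine (valuation_norm_le_one hx).antisymm ?_
  calc
    1 = v (Algebra.norm K x) * v (Algebra.norm K x⁻¹) := by
      simp only [← map_mul, mul_inv_cancel₀ hx₀, map_one]
    _ ≤ v (Algebra.norm K x) := mul_le_of_le_one_right' (valuation_norm_le_one hx')

theorem algebraMap_ne_zero_of_one_lt_valuation (ha : 1 < v a) : algebraMap K L a ≠ 0 := by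
  simpa using v.ne_zero_iff.mp (zero_lt_one.trans ha).ne'

theorem ne_zero_of_pow_sub_self_eq (hq : q ≠ 0) (ha : 1 < v a)
    (hu : u ^ q - u = algebraMap K L a) : u ≠ 0 := by
  rintro rfl
  exact algebraMap_ne_zero_of_one_lt_valuation (L := L) ha (by simp [← hu, hq])

theorem exists_integer_algebraMap_eq_inv (ha : 1 ≤ v a) :
    ∃ b : v.integer, algebraMap v.integer L b = (algebraMap K L a)⁻¹ :=
  ⟨⟨a⁻¹, by simpa [Valuation.mem_integer_iff] using inv_le_one_of_one_le₀ ha⟩,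
    map_inv₀ (algebraMap K L) a⟩

theorem isIntegral_inv_of_pow_sub_self_eq (hq : 1 < q) (ha : 1 < v a)
    (hu : u ^ q - u = algebraMap K L a) : IsIntegral v.integer u⁻¹ := by
  have ha₀ : algebraMap K L a ≠ 0 := algebraMap_ne_zero_of_one_lt_valuation ha
  have hu₀ : u ≠ 0 := ne_zero_of_pow_sub_self_eq hq.ne_bot ha hu
  obtain ⟨b, hb⟩ := exists_integer_algebraMap_eq_inv (L := L) ha.le
  refine isIntegral_of_pow_eq_aeval (n := q) (P := C b - C b * X ^ (q - 1)) ?_ ?_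
  · refine lt_of_le_of_lt (b := ((q - 1 : ℕ) : WithBot ℕ)) (by compute_degree!) ?_
    exact_mod_cast Nat.sub_lt (by omega) one_pos
  · obtain ⟨m, rfl⟩ : ∃ m, q = m + 1 := ⟨q - 1, by omega⟩
    simp only [map_sub, map_mul, aeval_C, aeval_X, map_pow, hb, add_tsub_cancel_right, inv_pow]
    field_simp
    linear_combination -u ^ m * hu

theorem isIntegral_div_of_pow_sub_self_eq (hq : 1 < q) (ha : 1 < v a)
    (hu : u ^ q - u = algebraMap K L a) : IsIntegral v.integer (u / algebraMap K L a) := by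
  have ha₀ : algebraMap K L a ≠ 0 := algebraMap_ne_zero_of_one_lt_valuation ha
  obtain ⟨b, hb⟩ := exists_integer_algebraMap_eq_inv (L := L) ha.le
  refine isIntegral_of_pow_eq_aeval (n := q) (P := C (b ^ (q - 1)) * (X + 1)) ?_ ?_
  · refine lt_of_le_of_lt (b := ((1 : ℕ) : WithBot ℕ)) (by compute_degree!) ?_
    exact_mod_cast hq
  · obtain ⟨m, rfl⟩ : ∃ m, q = m + 1 := ⟨q - 1, by omega⟩
    simp only [map_add, map_mul, map_one, aeval_C, aeval_X, map_pow, hb, add_tsub_cancel_right,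
      inv_pow, div_pow]
    field_simp
    linear_combination algebraMap K L a ^ (m + 1) * hu

theorem valuation_norm_pow_eq (hq : 1 < q) (ha : 1 < v a)
    (hu : u ^ q - u = algebraMap K L a) :
    v (Algebra.norm K u) ^ q = v a ^ finrank K L := by
  have ha₀ : algebraMap K L a ≠ 0 := algebraMap_ne_zero_of_one_lt_valuation ha
  have hu₀ : u ≠ 0 := ne_zero_of_pow_sub_self_eq hq.ne_bot ha hu
  set w : L := u ^ q / algebraMap K L a with hw
  have hw_int : IsIntegral v.integer w := by
    have : w = 1 + u / algebraMap K L a := by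
      rw [hw]; field_simp; linear_combination hu
    exact this ▸ isIntegral_one.add (isIntegral_div_of_pow_sub_self_eq hq ha hu)
  have hw_inv_int : IsIntegral v.integer w⁻¹ := by
    have : w⁻¹ = 1 - u⁻¹ ^ (q - 1) := by
      obtain ⟨m, rfl⟩ : ∃ m, q = m + 1 := ⟨q - 1, by omega⟩
      rw [hw, add_tsub_cancel_right, inv_pow]
      field_simp
      linear_combination -u ^ m * hu
    exact this ▸ isIntegral_one.sub ((isIntegral_inv_of_pow_sub_self_eq hq ha hu).pow _)
  have hw_norm : v (Algebra.norm K w) = 1 :=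
    valuation_norm_eq_one (by positivity) hw_int hw_inv_int
  calc
    v (Algebra.norm K u) ^ q = v (Algebra.norm K (w * algebraMap K L a)) := by
      rw [hw, div_mul_cancel₀ _ ha₀, map_pow, map_pow]
    _ = v a ^ finrank K L := by
      rw [map_mul, map_mul, hw_norm, one_mul, Algebra.norm_algebraMap, map_pow]

end Valuation

section Degree

variable {K L : Type*} [Field K] [Field L] [Algebra K L] {v : Valuation K ℤᵐ⁰}
  {q : ℕ} {a : K} {u : L}

theorem dvd_finrank_of_pow_sub_self_eq (hq : 1 < q) (ha : 1 < v a)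
    (hcop : IsCoprime (q : ℤ) (WithZero.log (v a))) (hu : u ^ q - u = algebraMap K L a) :
    q ∣ finrank K L := by
  have hlog : q * WithZero.log (v (Algebra.norm K u)) = finrank K L * WithZero.log (v a) := by
    simpa [WithZero.log_pow] using congrArg WithZero.log (valuation_norm_pow_eq hq ha hu)
  exact Int.natCast_dvd_natCast.mp (hcop.dvd_of_dvd_mul_right ⟨_, hlog.symm⟩)

theorem monic_X_pow_sub_X_sub_C {R : Type*} [CommRing R] [Nontrivial R] (hq : 1 < q) (a : R) :
    (X ^ q - X - C a).Monic := by
  rw [sub_sub]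
  refine monic_X_pow_sub ?_
  rw [degree_X_add_C]
  exact_mod_cast hq

theorem natDegree_X_pow_sub_X_sub_C (hq : 1 < q) (a : K) :
    (X ^ q - X - C a).natDegree = q := by
  rw [natDegree_sub_C, FiniteField.X_pow_card_sub_X_natDegree_eq K hq]

theorem finrank_adjoin_simple_of_pow_sub_self_eq (hq : 1 < q) (ha : 1 < v a)
    (hcop : IsCoprime (q : ℤ) (WithZero.log (v a))) (hu : u ^ q - u = algebraMap K L a) :
    finrank K K⟮u⟯ = q := by
  have hroot : aeval u (X ^ q - X - C a) = 0 := by simp [hu]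
  have hint : IsIntegral K u := ⟨_, monic_X_pow_sub_X_sub_C hq a, hroot⟩
  have hle : finrank K K⟮u⟯ ≤ q := by
    rw [adjoin.finrank hint, ← natDegree_X_pow_sub_X_sub_C hq a]
    exact natDegree_le_of_dvd (minpoly.dvd K u hroot) (monic_X_pow_sub_X_sub_C hq a).ne_zero
  have : FiniteDimensional K K⟮u⟯ := adjoin.finiteDimensional hint
  exact hle.antisymm <| Nat.le_of_dvd finrank_pos <|
    dvd_finrank_of_pow_sub_self_eq (u := AdjoinSimple.gen K u) hq ha hcop (Subtype.ext hu)

end Degree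

section FiniteField

variable {F : Type*} [Field F] [Fintype F]

theorem prod_X_sub_C_algebraMap (A : Type*) [CommRing A] [Algebra F A] :
    ∏ c : F, (X - C (algebraMap F A c)) = X ^ Fintype.card F - X := by
  have hmonic : (X ^ Fintype.card F - X : F[X]).Monic :=
    monic_X_pow_sub (by rw [degree_X]; exact_mod_cast Fintype.one_lt_card)
  have hcard := FiniteField.X_pow_card_sub_X_natDegree_eq F (Fintype.one_lt_card (α := F))
  have hprod : ∏ c : F, (X - C c) = X ^ Fintype.card F - X := by
    simpa [FiniteField.roots_X_pow_card_sub_X] using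
      prod_multiset_X_sub_C_of_monic_of_roots_card_eq hmonic
        (by rw [FiniteField.roots_X_pow_card_sub_X, hcard]; rfl)
  simpa [Polynomial.map_prod] using congrArg (map (algebraMap F A)) hprod

theorem prod_X_sub_C_add_algebraMap {A : Type*} [CommRing A] [Algebra F A] (u : A) :
    ∏ c : F, (X - C (u + algebraMap F A c)) =
      X ^ Fintype.card F - X - C (u ^ Fintype.card F - u) := by
  have hfrob : (X - C u : A[X]) ^ Fintype.card F = X ^ Fintype.card F - C u ^ Fintype.card F :=
    map_sub (FiniteField.frobeniusAlgHom F A[X]) X (C u)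
  have hcomp := congrArg (fun P => P.comp (X - C u)) (prod_X_sub_C_algebraMap (F := F) A)
  simp only [prod_comp, sub_comp, X_comp, C_comp, pow_comp, hfrob] at hcomp
  simp only [C_add, C_sub, C_pow, ← sub_sub, hcomp]
  ring

theorem pow_card_sub_self_eq_iff {A : Type*} [CommRing A] [IsDomain A] [Algebra F A] {u x : A} :
    x ^ Fintype.card F - x = u ^ Fintype.card F - u ↔ ∃ c : F, x = u + algebraMap F A c := by
  have heval := congrArg (eval x) (prod_X_sub_C_add_algebraMap (F := F) u)
  simp only [eval_prod, eval_sub, eval_X, eval_C, eval_pow] at heval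
  simp only [← sub_eq_zero (a := x ^ _ - x), ← heval, Finset.prod_eq_zero_iff, Finset.mem_univ,
    true_and, sub_eq_zero]

variable {K L : Type*} [Field K] [Field L] [Algebra K L] [Algebra F L] {a : K} {u : L}

theorem exists_apply_eq_add_algebraMap (hu : u ^ Fintype.card F - u = algebraMap K L a)
    (σ : Gal(L/K)) : ∃ c : F, σ u = u + algebraMap F L c :=
  pow_card_sub_self_eq_iff.mp <| by rw [← map_pow, ← map_sub, hu, σ.commutes]

theorem map_X_pow_card_sub_X_sub_C_splits (hu : u ^ Fintype.card F - u = algebraMap K L a) :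
    ((X ^ Fintype.card F - X - C a).map (algebraMap K L)).Splits := by
  have hmap : (X ^ Fintype.card F - X - C a).map (algebraMap K L) =
      ∏ c : F, (X - C (u + algebraMap F L c)) := by
    rw [prod_X_sub_C_add_algebraMap, hu]
    simp
  exact hmap ▸ Splits.prod fun c _ => Splits.X_sub_C _

variable [Algebra F K]

variable (F) in
theorem separable_X_pow_card_sub_X_sub_C (a : K) : (X ^ Fintype.card F - X - C a).Separable := by
  have hcard : (Fintype.card F : K) = 0 := by
    rw [← map_natCast (algebraMap F K), FiniteField.cast_card_eq_zero, map_zero]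
  exact ⟨0, -1, by simp [derivative_X_pow, hcard]⟩

variable [IsScalarTower F K L]

theorem adjoin_simple_eq_adjoin_rootSet_X_pow_card_sub_X_sub_C
    (hu : u ^ Fintype.card F - u = algebraMap K L a) :
    K⟮u⟯ = adjoin K ((X ^ Fintype.card F - X - C a).rootSet L) := by
  have hmem {r : L} : r ∈ (X ^ Fintype.card F - X - C a).rootSet L ↔
      ∃ c : F, r = u + algebraMap F L c := by
    rw [mem_rootSet_of_ne (separable_X_pow_card_sub_X_sub_C F a).ne_zero,
      ← pow_card_sub_self_eq_iff, hu]
    simp [sub_eq_zero]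
  refine le_antisymm ?_ ?_
  · exact adjoin_simple_le_iff.mpr (subset_adjoin _ _ (hmem.mpr ⟨0, by simp⟩))
  · refine adjoin_le_iff.mpr fun r hr => ?_
    obtain ⟨c, rfl⟩ := hmem.mp hr
    rw [IsScalarTower.algebraMap_apply F K L]
    exact add_mem (mem_adjoin_simple_self K u) (IntermediateField.algebraMap_mem _ _)

theorem isGalois_adjoin_simple_of_pow_card_sub_self_eq
    (hu : u ^ Fintype.card F - u = algebraMap K L a) :
    IsGalois K K⟮u⟯ := by
  rw [adjoin_simple_eq_adjoin_rootSet_X_pow_card_sub_X_sub_C hu]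
  have := adjoin_rootSet_isSplittingField (map_X_pow_card_sub_X_sub_C_splits hu)
  exact IsGalois.of_separable_splitting_field (separable_X_pow_card_sub_X_sub_C F a)

/-- The Artin–Schreier counterpart of the Kummer character: for `u ^ q - u ∈ K`, where `F ⊆ K` is
the field with `q` elements, it sends `σ` to the `c : F` such that `σ u = u + c`. -/
noncomputable def artinSchreierHom (hu : u ^ Fintype.card F - u = algebraMap K L a) :
    Gal(L/K) →* Multiplicative F :=
  MonoidHom.mk' (fun σ => .ofAdd (exists_apply_eq_add_algebraMap hu σ).choose) fun σ τ => by
    have h (ρ : Gal(L/K)) := exists_apply_eq_add_algebraMap (F := F) hu ρ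
    have hfixed (c : F) : σ (algebraMap F L c) = algebraMap F L c := by
      simp [IsScalarTower.algebraMap_apply F K L]
    have happly := calc
      u + algebraMap F L (h (σ * τ)).choose = σ (τ u) := (h (σ * τ)).choose_spec.symm
      _ = σ u + algebraMap F L (h τ).choose := by
        rw [congrArg σ (h τ).choose_spec, map_add, hfixed]
      _ = u + algebraMap F L ((h σ).choose + (h τ).choose) := by
        rw [congrArg (· + _) (h σ).choose_spec, map_add, add_assoc]
    exact congrArg Multiplicative.ofAdd ((algebraMap F L).injective (add_left_cancel happly))

theorem apply_eq_add_artinSchreierHom (hu : u ^ Fintype.card F - u = algebraMap K L a)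
    (σ : Gal(L/K)) : σ u = u + algebraMap F L (artinSchreierHom hu σ).toAdd :=
  (exists_apply_eq_add_algebraMap hu σ).choose_spec

theorem artinSchreierHom_gen_injective
    (hgen : AdjoinSimple.gen K u ^ Fintype.card F - AdjoinSimple.gen K u = algebraMap K K⟮u⟯ a) :
    Function.Injective (artinSchreierHom (F := F) hgen) := by
  intro σ τ hστ
  have hgen_eq : σ (AdjoinSimple.gen K u) = τ (AdjoinSimple.gen K u) := by
    simp only [apply_eq_add_artinSchreierHom hgen, hστ]
  have : (σ : K⟮u⟯ →ₐ[K] K⟮u⟯) = τ := adjoin_algHom_ext K (by rintro _ rfl; exact hgen_eq)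
  exact AlgEquiv.coe_toAlgHom_injective this

theorem nonempty_gal_adjoin_simple_mulEquiv_multiplicative
    (hu : u ^ Fintype.card F - u = algebraMap K L a)
    (hfinrank : finrank K K⟮u⟯ = Fintype.card F) :
    Nonempty (Gal(K⟮u⟯/K) ≃* Multiplicative F) := by
  have := isGalois_adjoin_simple_of_pow_card_sub_self_eq hu
  have : FiniteDimensional K K⟮u⟯ := Module.finite_of_finrank_pos (hfinrank ▸ Fintype.card_pos)
  have hgen : AdjoinSimple.gen K u ^ Fintype.card F - AdjoinSimple.gen K u = algebraMap K K⟮u⟯ a :=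
    Subtype.ext hu
  refine ⟨.ofBijective (artinSchreierHom (F := F) hgen) ?_⟩
  refine (Nat.bijective_iff_injective_and_card _).mpr ⟨artinSchreierHom_gen_injective hgen, ?_⟩
  rw [IsGalois.card_aut_eq_finrank, hfinrank, Nat.card_eq_fintype_card, Fintype.card_multiplicative]

end FiniteField

section ElementaryAbelian

variable {p n : ℕ} [Fact p.Prime]

theorem nonempty_galoisField_ringHom {K : Type*} [Field K] [CharP K p] (hn : n ≠ 0)
    (hsplit : (X ^ p ^ n - X : K[X]).Splits) : Nonempty (GaloisField p n →+* K) := by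
  let := ZMod.algebra K p
  have := FiniteField.isSplittingField_of_nat_card_eq p n (GaloisField.card p n hn)
  exact ⟨IsSplittingField.lift (GaloisField p n) (X ^ p ^ n - X : (ZMod p)[X])
    (by simpa using hsplit)⟩

theorem nonempty_multiplicative_galoisField_mulEquiv (hn : n ≠ 0) :
    Nonempty (Multiplicative (GaloisField p n) ≃* Multiplicative (Fin n → ZMod p)) := by
  have e : GaloisField p n ≃ₗ[ZMod p] (Fin n → ZMod p) :=
    LinearEquiv.ofFinrankEq _ _ (by simp [GaloisField.finrank p hn])
  exact ⟨e.toAddEquiv.toMultiplicative⟩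

theorem artinSchreier_extension_galois_elementaryAbelian_general
    {K L : Type*} [Field K] [CharP K p] [Field L] [Algebra K L] {v : Valuation K ℤᵐ⁰} {a : K}
    (hsplit : (X ^ p ^ n - X : K[X]).Splits) (ha : 1 < v a)
    (hcop : IsCoprime ((p ^ n : ℕ) : ℤ) (WithZero.log (v a)))
    {u : L} (hu : aeval u (X ^ p ^ n - X - C a) = 0) :
    IsGalois K K⟮u⟯ ∧ finrank K K⟮u⟯ = p ^ n ∧
      Nonempty (Gal(K⟮u⟯/K) ≃* Multiplicative (Fin n → ZMod p)) := by
  have hn : n ≠ 0 := by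
    rintro rfl
    obtain rfl : a = 0 := by simpa using hu
    simp at ha
  obtain ⟨φ⟩ := nonempty_galoisField_ringHom hn hsplit
  let := Fintype.ofFinite (GaloisField p n)
  let := φ.toAlgebra
  let := ((algebraMap K L).comp φ).toAlgebra
  have : IsScalarTower (GaloisField p n) K L := .of_algebraMap_eq fun _ => rfl
  have hcard : Fintype.card (GaloisField p n) = p ^ n := by
    rw [← Nat.card_eq_fintype_card, GaloisField.card p n hn]
  have hroot : u ^ p ^ n - u = algebraMap K L a := by simpa [sub_eq_zero] using hu
  have hfinrank : finrank K K⟮u⟯ = p ^ n :=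
    finrank_adjoin_simple_of_pow_sub_self_eq (Nat.one_lt_pow hn (Fact.out : p.Prime).one_lt)
      ha hcop hroot
  rw [← hcard] at hroot hfinrank
  obtain ⟨e⟩ := nonempty_gal_adjoin_simple_mulEquiv_multiplicative hroot hfinrank
  obtain ⟨e'⟩ := nonempty_multiplicative_galoisField_mulEquiv (p := p) hn
  exact ⟨isGalois_adjoin_simple_of_pow_card_sub_self_eq hroot, hfinrank.trans hcard, ⟨e.trans e'⟩⟩

end ElementaryAbelian

/-- Let `k` be an algebraically closed field of characteristic `p > 0`,
`n ≥ 1`, and let `u` be a root (in an algebraic closure of `k(y)`) of the polynomial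
`f(X) = X^{p^n} - X - y^{p^n+1}` over the rational function field `k(y)`.  Then
`k(y)(u)/k(y)` is a Galois extension of degree `p^n` whose Galois group is an elementary
abelian `p`-group, isomorphic to the direct sum of `n` copies of `ℤ/pℤ`. -/
theorem artinSchreier_extension_galois_elementaryAbelian
    (p : ℕ) [Fact p.Prime] (k : Type) [Field k] [IsAlgClosed k] [CharP k p]
    (n : ℕ) (hn : 1 ≤ n) (u : AlgebraicClosure (RatFunc k))
    (hu : Polynomial.aeval u
        (Polynomial.X ^ (p ^ n) - Polynomial.X - Polynomial.C (RatFunc.X ^ (p ^ n + 1)) :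
          Polynomial (RatFunc k)) = 0) :
    IsGalois (RatFunc k) (IntermediateField.adjoin (RatFunc k) {u}) ∧
    Module.finrank (RatFunc k) (IntermediateField.adjoin (RatFunc k) {u}) = p ^ n ∧
    Nonempty
      ((IntermediateField.adjoin (RatFunc k) {u} ≃ₐ[RatFunc k]
          IntermediateField.adjoin (RatFunc k) {u}) ≃*
        Multiplicative (Fin n → ZMod p)) := by
  classical
  have hsplit : (X ^ p ^ n - X : (RatFunc k)[X]).Splits := by
    have := (IsAlgClosed.splits (X ^ p ^ n - X : k[X])).map RatFunc.C
    simpa using this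
  have hpole : 1 < RatFunc.inftyValuation k (RatFunc.X ^ (p ^ n + 1)) := by
    rw [map_pow, RatFunc.inftyValuation.X]
    exact one_lt_pow₀ (WithZero.exp_lt_exp.mpr one_pos) (Nat.succ_ne_zero _)
  exact artinSchreier_extension_galois_elementaryAbelian_general hsplit hpole ⟨-1, 1, by simp⟩ hu
end
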